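/- arXiv:math/9502238 — 7 statements merged into one kernel-verified Lean document; each statement's English description precedes it below -/
import Mathlib

section
/- For all integers v, k, t with 1 ≤ t ≤ k ≤ v, the covering number satisfies the Schönheim inequality C(v,k,t) ≥ ⌈(v/k) · C(v−1, k−1, t−1)⌉. -/
/-- A `(v,k,t)` covering design: a family of `k`-element subsets (blocks) of a
`v`-element set such that every `t`-element subset is contained in at least one block. -/
def IsCoverDesign (v k t : ℕ) (B : Finset (Finset (Fin v))) : Prop :=
  (∀ b ∈ B, b.card = k) ∧
  ∀ s : Finset (Fin v), s.card = t → ∃ b ∈ B, s ⊆ b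

/-- `coverNumber v k t` is `C(v,k,t)`, the minimum number of blocks in a
`(v,k,t)` covering design. -/
noncomputable def coverNumber (v k t : ℕ) : ℕ :=
  sInf {n : ℕ | ∃ B : Finset (Finset (Fin v)), IsCoverDesign v k t B ∧ B.card = n}

theorem coverNumber_le_degree (w j s : ℕ) (B : Finset (Finset (Fin (w + 1))))
    (hB : IsCoverDesign (w + 1) (j + 1) (s + 1) B) (x : Fin (w + 1)) :
    coverNumber w j s ≤ (B.filter (fun b => x ∈ b)).card := by
  classical
  let f : Finset (Fin (w + 1)) → Finset (Fin w) :=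
    fun b => Finset.univ.filter (fun i => x.succAbove i ∈ b)
  have hmap : ∀ b, (f b).map x.succAboveEmb = b.erase x := by
    intro b
    ext y
    simp only [f, Finset.mem_map, Finset.mem_filter, Finset.mem_univ, true_and,
      Finset.mem_erase, Fin.succAboveEmb_apply]
    constructor
    · rintro ⟨i, hi, rfl⟩
      exact ⟨Fin.succAbove_ne x i, hi⟩
    · rintro ⟨hne, hy⟩
      obtain ⟨i, rfl⟩ := Fin.exists_succAbove_eq hne
      exact ⟨i, hy, rfl⟩
  refine le_trans (Nat.sInf_le ⟨(B.filter (fun b => x ∈ b)).image f, ⟨?_, ?_⟩, rfl⟩)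
    Finset.card_image_le
  · intro c hc
    obtain ⟨b, hb, rfl⟩ := Finset.mem_image.1 hc
    obtain ⟨hb, hx⟩ := Finset.mem_filter.1 hb
    rw [← Finset.card_map x.succAboveEmb, hmap, Finset.card_erase_of_mem hx, hB.1 b hb]
    rfl
  · intro u hu
    have hxu : x ∉ u.map x.succAboveEmb := by
      simp [Fin.succAbove_ne]
    obtain ⟨b, hb, hub⟩ := hB.2 (insert x (u.map x.succAboveEmb)) (by
      rw [Finset.card_insert_of_notMem hxu, Finset.card_map, hu])
    refine ⟨f b, Finset.mem_image_of_mem _ (Finset.mem_filter.2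
      ⟨hb, hub (Finset.mem_insert_self _ _)⟩), ?_⟩
    intro i hi
    simp only [f, Finset.mem_filter, Finset.mem_univ, true_and]
    exact hub (Finset.mem_insert_of_mem (Finset.mem_map_of_mem x.succAboveEmb hi))

/-- The Schönheim inequality: `C(v,k,t) ≥ ⌈(v/k) · C(v−1,k−1,t−1)⌉`. -/
theorem schonheim_inequality (v k t : ℕ) (ht : 1 ≤ t) (htk : t ≤ k) (hkv : k ≤ v) :
    coverNumber v k t ≥
      ⌈((v : ℚ) / (k : ℚ)) * (coverNumber (v - 1) (k - 1) (t - 1) : ℚ)⌉₊ := by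
  classical
  obtain ⟨s, rfl⟩ : ∃ s, t = s + 1 := ⟨t - 1, by omega⟩
  obtain ⟨j, rfl⟩ : ∃ j, k = j + 1 := ⟨k - 1, by omega⟩
  obtain ⟨w, rfl⟩ : ∃ w, v = w + 1 := ⟨v - 1, by omega⟩
  have hne : {n : ℕ | ∃ B : Finset (Finset (Fin (w + 1))),
      IsCoverDesign (w + 1) (j + 1) (s + 1) B ∧ B.card = n}.Nonempty := by
    refine ⟨_, Finset.powersetCard (j + 1) Finset.univ, ⟨?_, ?_⟩, rfl⟩
    · intro b hb
      exact (Finset.mem_powersetCard.1 hb).2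
    · intro u hu
      obtain ⟨b, hub, -, hb⟩ := Finset.exists_subsuperset_card_eq (Finset.subset_univ u)
        (n := j + 1) (by omega) (by simpa using hkv)
      exact ⟨b, Finset.mem_powersetCard.2 ⟨Finset.subset_univ _, hb⟩, hub⟩
  obtain ⟨B, hB, hcard⟩ := Nat.sInf_mem hne
  change B.card = coverNumber (w + 1) (j + 1) (s + 1) at hcard
  rw [← hcard]
  simp only [Nat.add_sub_cancel]
  have hsum : ∑ x : Fin (w + 1), (B.filter (fun b => x ∈ b)).card = B.card * (j + 1) := by
    have h := Finset.sum_card_bipartiteAbove_eq_sum_card_bipartiteBelow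
      (s := (Finset.univ : Finset (Fin (w + 1)))) (t := B) (fun x b => x ∈ b)
    simp only [Finset.bipartiteAbove, Finset.bipartiteBelow] at h
    rw [h, Finset.sum_congr rfl (g := fun _ => j + 1), Finset.sum_const, smul_eq_mul]
    intro b hb
    rw [← hB.1 b hb]
    congr 1
    ext y
    simp
  have hle : (w + 1) * coverNumber w j s ≤ B.card * (j + 1) := by
    rw [← hsum]
    calc (w + 1) * coverNumber w j s = ∑ _x : Fin (w + 1), coverNumber w j s := by simp
      _ ≤ _ := Finset.sum_le_sum (fun x _ => coverNumber_le_degree w j s B hB x)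
  apply Nat.ceil_le.2
  have hj : (0 : ℚ) < ((j + 1 : ℕ) : ℚ) := by positivity
  rw [div_mul_eq_mul_div, div_le_iff₀ hj]
  exact_mod_cast hle
end

section
/- For all integers v, k, t with 1 ≤ t ≤ k ≤ v, the covering number satisfies C(v,k,t) ≥ L(v,k,t), where L(v,k,t) = ⌈(v/k)·⌈((v−1)/(k−1))·⋯·⌈(v−t+1)/(k−t+1)⌉⋯⌉⌉ is the iterated-ceiling Schönheim bound. -/
/-- The iterated-ceiling Schönheim bound
`L(v,k,t) = ⌈(v/k)·⌈((v−1)/(k−1))·⋯·⌈(v−t+1)/(k−t+1)⌉⋯⌉⌉`, with `L(v,k,0) = 1`. -/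
noncomputable def schonheimL : ℕ → ℕ → ℕ → ℕ
  | _, _, 0 => 1
  | v, k, t + 1 => ⌈((v : ℚ) / (k : ℚ)) * (schonheimL (v - 1) (k - 1) t : ℚ)⌉₊

theorem schonheim_aux {α : Type*} [DecidableEq α] (t : ℕ) :
    ∀ (k : ℕ) (S : Finset α) (B : Finset (Finset α)), t ≤ k →
      (∀ b ∈ B, b.card = k ∧ b ⊆ S) →
      (∀ s : Finset α, s ⊆ S → s.card = t → ∃ b ∈ B, s ⊆ b) →
      schonheimL S.card k t ≤ B.card := by
  induction t with
  | zero =>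
    intro k S B _ _ hc
    obtain ⟨b, hb, _⟩ := hc ∅ (Finset.empty_subset _) rfl
    rw [schonheimL]
    exact Finset.card_pos.mpr ⟨b, hb⟩
  | succ t ih =>
    intro k S B htk hB hc
    have hdeg : ∀ x ∈ S, schonheimL (S.card - 1) (k - 1) t ≤ (B.filter (fun b => x ∈ b)).card := by
      intro x hx
      have h := ih (k - 1) (S.erase x) ((B.filter (fun b => x ∈ b)).image (fun b => b.erase x))
        (by omega) ?_ ?_
      · rw [Finset.card_erase_of_mem hx] at h
        exact h.trans Finset.card_image_le
      · intro b hb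
        obtain ⟨c, hcm, rfl⟩ := Finset.mem_image.mp hb
        obtain ⟨hcB, hxc⟩ := Finset.mem_filter.mp hcm
        refine ⟨?_, Finset.erase_subset_erase x (hB c hcB).2⟩
        rw [Finset.card_erase_of_mem hxc, (hB c hcB).1]
      · intro s hs hst
        have hxs : x ∉ s := fun h => (Finset.mem_erase.mp (hs h)).1 rfl
        obtain ⟨b, hb, hsb⟩ := hc (insert x s)
          (Finset.insert_subset hx (hs.trans (Finset.erase_subset _ _)))
          (by rw [Finset.card_insert_of_notMem hxs, hst])
        obtain ⟨hxb, hsb'⟩ := Finset.insert_subset_iff.mp hsb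
        exact ⟨b.erase x, Finset.mem_image.mpr ⟨b, Finset.mem_filter.mpr ⟨hb, hxb⟩, rfl⟩,
          Finset.subset_erase.mpr ⟨hsb', hxs⟩⟩
    have hsum : ∑ x ∈ S, (B.filter (fun b => x ∈ b)).card = B.card * k := by
      have h1 := Finset.sum_card_bipartiteAbove_eq_sum_card_bipartiteBelow
        (s := S) (t := B) (fun x b => x ∈ b)
      simp only [Finset.bipartiteAbove, Finset.bipartiteBelow] at h1
      rw [h1, Finset.sum_const_nat]
      intro b hb
      rw [Finset.filter_mem_eq_inter, Finset.inter_eq_right.mpr (hB b hb).2, (hB b hb).1]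
    have hle : S.card * schonheimL (S.card - 1) (k - 1) t ≤ B.card * k := by
      rw [← hsum, ← smul_eq_mul]
      exact Finset.card_nsmul_le_sum _ _ _ hdeg
    rw [schonheimL]
    apply Nat.ceil_le.mpr
    have hk : (0 : ℚ) < k := by exact_mod_cast (by omega : 0 < k)
    rw [div_mul_eq_mul_div, div_le_iff₀ hk]
    exact_mod_cast hle

/-- The Schönheim bound: `C(v,k,t) ≥ L(v,k,t)`. -/
theorem schonheim_bound (v k t : ℕ) (ht : 1 ≤ t) (htk : t ≤ k) (hkv : k ≤ v) :
    coverNumber v k t ≥ schonheimL v k t := by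
  unfold coverNumber
  apply le_csInf
  · refine ⟨_, Finset.univ.powersetCard k, ⟨?_, ?_⟩, rfl⟩
    · intro b hb
      exact (Finset.mem_powersetCard.mp hb).2
    · intro s hs
      obtain ⟨b, hsb, hb, hbk⟩ := Finset.exists_subsuperset_card_eq (Finset.subset_univ s)
        (n := k) (by omega) (by simpa using hkv)
      exact ⟨b, Finset.mem_powersetCard.mpr ⟨hb, hbk⟩, hsb⟩
  · rintro n ⟨B, ⟨hB, hc⟩, rfl⟩
    have h := schonheim_aux t k (Finset.univ : Finset (Fin v)) B htk
      (fun b hb => ⟨hB b hb, Finset.subset_univ b⟩) (fun s _ hs => hc s hs)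
    simpa using h
end

section
/- For all integers v1, v2, k, t with t ≤ k and with k ≤ v1 + v2, the covering number satisfies C(v1+v2, k, t) ≤ Σ_{s=0}^{t} min_{ℓ : s ≤ ℓ ≤ k−t+s, ℓ ≤ v1, k−ℓ ≤ v2} C(v1, ℓ, s) · C(v2, k−ℓ, t−s). -/
theorem exists_optimal_design {v k t : ℕ} (htk : t ≤ k) (hk : k ≤ v) :
    ∃ B, IsCoverDesign v k t B ∧ B.card = coverNumber v k t := by
  have h : {n : ℕ | ∃ B : Finset (Finset (Fin v)), IsCoverDesign v k t B ∧ B.card = n}.Nonempty := by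
    refine ⟨_, Finset.powersetCard k Finset.univ, ⟨?_, ?_⟩, rfl⟩
    · intro b hb
      exact (Finset.mem_powersetCard.1 hb).2
    · intro s hs
      obtain ⟨u, hsu, hu⟩ := Finset.exists_superset_card_eq (s := s) (n := k)
        (by omega) (by simpa using hk)
      exact ⟨u, Finset.mem_powersetCard.2 ⟨Finset.subset_univ _, hu⟩, hsu⟩
  exact Nat.sInf_mem h

/-- Disjoint union of a subset of the left part and a subset of the right part. -/
def glue {v1 v2 : ℕ} (p : Finset (Fin v1) × Finset (Fin v2)) : Finset (Fin (v1 + v2)) :=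
  p.1.map (Fin.castAddEmb v2) ∪ p.2.map (Fin.natAddEmb v1)

theorem card_glue {v1 v2 : ℕ} (p : Finset (Fin v1) × Finset (Fin v2)) :
    (glue p).card = p.1.card + p.2.card := by
  unfold glue
  rw [Finset.card_union_of_disjoint, Finset.card_map, Finset.card_map]
  rw [Finset.disjoint_left]
  intro x hx hy
  obtain ⟨a, -, rfl⟩ := Finset.mem_map.1 hx
  obtain ⟨b, -, hb⟩ := Finset.mem_map.1 hy
  have := congrArg Fin.val hb
  simp at this
  omega

theorem exists_glue {v1 v2 : ℕ} (T : Finset (Fin (v1 + v2))) :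
    ∃ p : Finset (Fin v1) × Finset (Fin v2), glue p = T := by
  refine ⟨(Finset.univ.filter fun i => Fin.castAdd v2 i ∈ T,
    Finset.univ.filter fun i => Fin.natAdd v1 i ∈ T), ?_⟩
  ext x
  simp only [glue, Finset.mem_union, Finset.mem_map, Finset.mem_filter, Finset.mem_univ, true_and,
    Fin.castAddEmb_apply, Fin.natAddEmb_apply]
  constructor
  · rintro (⟨a, ha, rfl⟩ | ⟨a, ha, rfl⟩) <;> exact ha
  · intro hx
    induction x using Fin.addCases with
    | left i => exact Or.inl ⟨i, hx, rfl⟩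
    | right i => exact Or.inr ⟨i, hx, rfl⟩

theorem glue_mono {v1 v2 : ℕ} {p q : Finset (Fin v1) × Finset (Fin v2)}
    (h1 : p.1 ⊆ q.1) (h2 : p.2 ⊆ q.2) : glue p ⊆ glue q :=
  Finset.union_subset_union (Finset.map_subset_map.2 h1) (Finset.map_subset_map.2 h2)

theorem exists_partial (v1 v2 k t s ℓ : ℕ) (htk : t ≤ k) (hs : s ≤ t) (h1 : s ≤ ℓ)
    (h2 : ℓ ≤ k - t + s) (h3 : ℓ ≤ v1) (h4 : k - ℓ ≤ v2) :
    ∃ D : Finset (Finset (Fin (v1 + v2))), (∀ b ∈ D, b.card = k) ∧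
      (∀ p : Finset (Fin v1) × Finset (Fin v2), p.1.card = s → p.2.card = t - s →
        ∃ b ∈ D, glue p ⊆ b) ∧
      D.card ≤ coverNumber v1 ℓ s * coverNumber v2 (k - ℓ) (t - s) := by
  obtain ⟨B1, ⟨hB1, hC1⟩, hn1⟩ := exists_optimal_design h1 h3
  obtain ⟨B2, ⟨hB2, hC2⟩, hn2⟩ := exists_optimal_design (t := t - s) (by omega) h4
  refine ⟨(B1 ×ˢ B2).image glue, ?_, ?_, ?_⟩
  · intro b hb
    obtain ⟨p, hp, rfl⟩ := Finset.mem_image.1 hb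
    rw [Finset.mem_product] at hp
    rw [card_glue, hB1 _ hp.1, hB2 _ hp.2]
    omega
  · intro p hp1 hp2
    obtain ⟨b1, hb1, hs1⟩ := hC1 _ hp1
    obtain ⟨b2, hb2, hs2⟩ := hC2 _ hp2
    exact ⟨glue (b1, b2), Finset.mem_image_of_mem _ (Finset.mk_mem_product hb1 hb2),
      glue_mono hs1 hs2⟩
  · rw [← hn1, ← hn2, ← Finset.card_product]
    exact Finset.card_image_le

/-- Combining smaller coverings:
`C(v1+v2,k,t) ≤ Σ_{s=0}^{t} min_{ℓ : s ≤ ℓ ≤ k−t+s, ℓ ≤ v1, k−ℓ ≤ v2} C(v1,ℓ,s)·C(v2,k−ℓ,t−s)`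
(the infimum over an empty range being `⊤` in `ℕ∞`). -/
theorem combining_coverings (v1 v2 k t : ℕ) (htk : t ≤ k) (hk : k ≤ v1 + v2) :
    (coverNumber (v1 + v2) k t : ℕ∞) ≤
      ∑ s ∈ Finset.range (t + 1),
        ⨅ ℓ ∈ {ℓ : ℕ | s ≤ ℓ ∧ ℓ ≤ k - t + s ∧ ℓ ≤ v1 ∧ k - ℓ ≤ v2},
          (coverNumber v1 ℓ s * coverNumber v2 (k - ℓ) (t - s) : ℕ∞) := by
  classical
  have key : ∀ s ∈ Finset.range (t + 1),
      (⨅ ℓ ∈ {ℓ : ℕ | s ≤ ℓ ∧ ℓ ≤ k - t + s ∧ ℓ ≤ v1 ∧ k - ℓ ≤ v2},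
          (coverNumber v1 ℓ s * coverNumber v2 (k - ℓ) (t - s) : ℕ∞)) = ⊤ ∨
      ∃ D : Finset (Finset (Fin (v1 + v2))), (∀ b ∈ D, b.card = k) ∧
      (∀ p : Finset (Fin v1) × Finset (Fin v2), p.1.card = s → p.2.card = t - s →
        ∃ b ∈ D, glue p ⊆ b) ∧
      (D.card : ℕ∞) ≤ ⨅ ℓ ∈ {ℓ : ℕ | s ≤ ℓ ∧ ℓ ≤ k - t + s ∧ ℓ ≤ v1 ∧ k - ℓ ≤ v2},
          (coverNumber v1 ℓ s * coverNumber v2 (k - ℓ) (t - s) : ℕ∞) := by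
    intro s hs
    have hst : s ≤ t := by simpa [Nat.lt_succ_iff] using hs
    rw [iInf_subtype']
    rcases isEmpty_or_nonempty
      {ℓ : ℕ | s ≤ ℓ ∧ ℓ ≤ k - t + s ∧ ℓ ≤ v1 ∧ k - ℓ ≤ v2} with he | hne
    · left
      exact iInf_of_empty _
    · right
      obtain ⟨⟨ℓ, h1, h2, h3, h4⟩, hℓ⟩ := ciInf_mem
        (fun x : {ℓ : ℕ | s ≤ ℓ ∧ ℓ ≤ k - t + s ∧ ℓ ≤ v1 ∧ k - ℓ ≤ v2} =>
          (coverNumber v1 x s * coverNumber v2 (k - x) (t - s) : ℕ∞))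
      obtain ⟨D, hD1, hD2, hD3⟩ := exists_partial v1 v2 k t s ℓ htk hst h1 h2 h3 h4
      refine ⟨D, hD1, hD2, le_of_le_of_eq ?_ hℓ⟩
      beta_reduce
      exact_mod_cast hD3
  by_cases htop : ∃ s ∈ Finset.range (t + 1),
      (⨅ ℓ ∈ {ℓ : ℕ | s ≤ ℓ ∧ ℓ ≤ k - t + s ∧ ℓ ≤ v1 ∧ k - ℓ ≤ v2},
          (coverNumber v1 ℓ s * coverNumber v2 (k - ℓ) (t - s) : ℕ∞)) = ⊤
  · obtain ⟨s, hs, h⟩ := htop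
    refine le_trans ?_ (Finset.single_le_sum (fun _ _ => zero_le) hs)
    rw [h]
    exact le_top
  · have key2 := fun s hs => (key s hs).resolve_left (fun h => htop ⟨s, hs, h⟩)
    choose! D hD1 hD2 hD3 using key2
    refine le_trans ?_ (Finset.sum_le_sum hD3)
    have hle : coverNumber (v1 + v2) k t ≤ ((Finset.range (t + 1)).biUnion D).card := by
      refine Nat.sInf_le ⟨_, ⟨?_, ?_⟩, rfl⟩
      · intro b hb
        obtain ⟨s, hs, hb⟩ := Finset.mem_biUnion.1 hb
        exact hD1 s hs b hb
      · intro T hT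
        obtain ⟨p, rfl⟩ := exists_glue T
        rw [card_glue] at hT
        have hs : p.1.card ∈ Finset.range (t + 1) := Finset.mem_range.2 (by omega)
        obtain ⟨b, hb, hpb⟩ := hD2 _ hs p rfl (by omega)
        exact ⟨b, Finset.mem_biUnion.2 ⟨_, hs, hb⟩, hpb⟩
    exact_mod_cast hle.trans Finset.card_biUnion_le
end

section
/- For all integers v, k, t with 1 ≤ t ≤ k ≤ v, the covering number satisfies C(v−1, k−1, t−1) ≤ ⌊(k/v) · C(v,k,t)⌋: choosing an element of the v-set occurring in the fewest blocks of an optimal (v,k,t) covering, keeping only the blocks containing it, and deleting that element from them, yields a (v−1,k−1,t−1) covering of size at most ⌊k·C(v,k,t)/v⌋. -/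
/-- `C(v−1,k−1,t−1) ≤ ⌊(k/v)·C(v,k,t)⌋` (Schönheim): keep only the blocks through an
element lying in the fewest blocks of an optimal `(v,k,t)` covering and delete that
element from them. -/
theorem cover_derive (v k t : ℕ) (ht : 1 ≤ t) (htk : t ≤ k) (hkv : k ≤ v) :
    coverNumber (v - 1) (k - 1) (t - 1) ≤ k * coverNumber v k t / v := by
  obtain ⟨n, rfl⟩ : ∃ n, v = n + 1 := ⟨v - 1, by omega⟩
  have hne : {m : ℕ | ∃ B : Finset (Finset (Fin (n + 1))),
      IsCoverDesign (n + 1) k t B ∧ B.card = m}.Nonempty := by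
    refine ⟨_, Finset.powersetCard k Finset.univ, ⟨?_, ?_⟩, rfl⟩
    · intro b hb
      exact (Finset.mem_powersetCard.1 hb).2
    · intro s hs
      obtain ⟨u, hsu, -, hu⟩ := Finset.exists_subsuperset_card_eq (Finset.subset_univ s)
        (n := k) (by omega) (by simpa using hkv)
      exact ⟨u, Finset.mem_powersetCard.2 ⟨Finset.subset_univ _, hu⟩, hsu⟩
  obtain ⟨B, ⟨hBk, hBt⟩, hBc⟩ := Nat.sInf_mem hne
  have hBcard : B.card = coverNumber (n + 1) k t := hBc
  rw [← hBcard]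
  -- double counting of incidences
  have hsum : ∑ x : Fin (n + 1), (B.filter (fun b => x ∈ b)).card = k * B.card := by
    have h := Finset.sum_card_bipartiteAbove_eq_sum_card_bipartiteBelow
      (s := (Finset.univ : Finset (Fin (n + 1)))) (t := B) (fun x b => x ∈ b)
    simp only [Finset.bipartiteAbove, Finset.bipartiteBelow] at h
    rw [h, Finset.sum_congr rfl (g := fun _ => k)]
    · simp [mul_comm]
    · intro b hb
      simpa using hBk b hb
  obtain ⟨x, hx⟩ : ∃ x : Fin (n + 1), (n + 1) * (B.filter (fun b => x ∈ b)).card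
      ≤ k * B.card := by
    by_contra! hcon
    have h1 : ∑ _x : Fin (n + 1), k * B.card
        < ∑ x : Fin (n + 1), (n + 1) * (B.filter (fun b => x ∈ b)).card :=
      Finset.sum_lt_sum_of_nonempty Finset.univ_nonempty (fun x _ => hcon x)
    rw [← Finset.mul_sum (a := n + 1), hsum] at h1
    simp at h1
  rw [Nat.le_div_iff_mul_le (by omega), mul_comm]
  refine le_trans (Nat.mul_le_mul_left _ ?_) hx
  -- the derived covering
  let f : Finset (Fin (n + 1)) → Finset (Fin n) :=
    fun b => Finset.univ.filter (fun i => x.succAbove i ∈ b)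
  refine le_trans (Nat.sInf_le ⟨(B.filter (fun b => x ∈ b)).image f, ⟨?_, ?_⟩, rfl⟩)
    Finset.card_image_le
  · intro c hc
    obtain ⟨b, hb, rfl⟩ := Finset.mem_image.1 hc
    obtain ⟨hbB, hxb⟩ := Finset.mem_filter.1 hb
    have h : (f b).map x.succAboveEmb = b.erase x := by
      ext y
      rcases Fin.eq_self_or_eq_succAbove x y with rfl | ⟨i, rfl⟩
      · simp [f]
      · simp [f]
    have h2 := congrArg Finset.card h
    rw [Finset.card_map, Finset.card_erase_of_mem hxb, hBk b hbB] at h2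
    exact h2
  · intro s hs
    have hscard : s.card = t - 1 := hs
    have hxs : x ∉ s.map x.succAboveEmb := by simp
    obtain ⟨b, hb, hsb⟩ := hBt (insert x (s.map x.succAboveEmb)) (by
      rw [Finset.card_insert_of_notMem hxs, Finset.card_map, hscard]
      omega)
    refine ⟨f b, Finset.mem_image_of_mem _ (Finset.mem_filter.2
      ⟨hb, hsb (Finset.mem_insert_self _ _)⟩), ?_⟩
    intro i hi
    refine Finset.mem_filter.2 ⟨Finset.mem_univ _, hsb (Finset.mem_insert_of_mem ?_)⟩
    exact Finset.mem_map.2 ⟨i, hi, rfl⟩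
end

section
/- For all integers v, k, t, m with 0 ≤ t ≤ k ≤ v and m ≥ 1, the covering number satisfies C(mv, mk, t) ≤ C(v,k,t): replacing each element of the v-set by m distinct new elements in every block of a (v,k,t) covering yields an (mv,mk,t) covering of the same size. -/
/-- `C(mv,mk,t) ≤ C(v,k,t)`: replace each element of the `v`-set by `m` distinct new
elements in every block of a `(v,k,t)` covering. -/
theorem cover_multiply (v k t m : ℕ) (htk : t ≤ k) (hkv : k ≤ v) (hm : 1 ≤ m) :
    coverNumber (m * v) (m * k) t ≤ coverNumber v k t := by
  have hne : {n : ℕ | ∃ B : Finset (Finset (Fin v)),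
      IsCoverDesign v k t B ∧ B.card = n}.Nonempty := by
    refine ⟨_, Finset.powersetCard k Finset.univ, ⟨?_, ?_⟩, rfl⟩
    · intro b hb
      exact (Finset.mem_powersetCard.mp hb).2
    · intro s hs
      obtain ⟨b, hsb, hb⟩ := Finset.exists_superset_card_eq (s := s) (n := k)
        (by omega) (by simpa using hkv)
      exact ⟨b, Finset.mem_powersetCard.mpr ⟨Finset.subset_univ _, hb⟩, hsb⟩
  obtain ⟨B, ⟨hB1, hB2⟩, hBc⟩ := Nat.sInf_mem hne
  -- the blown-up block: each element is replaced by `m` copies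
  let F : Finset (Fin v) → Finset (Fin (m * v)) := fun b =>
    ((Finset.univ : Finset (Fin m)) ×ˢ b).map finProdFinEquiv.toEmbedding
  have hle : coverNumber (m * v) (m * k) t ≤ (B.image F).card := by
    refine Nat.sInf_le ⟨B.image F, ⟨?_, ?_⟩, rfl⟩
    · intro c hc
      obtain ⟨b, hb, rfl⟩ := Finset.mem_image.mp hc
      simp [F, hB1 b hb]
    · intro s hs
      obtain ⟨u, hsu, hu⟩ := Finset.exists_superset_card_eq
        (s := s.image (fun x => (finProdFinEquiv.symm x).2)) (n := t)
        (hs ▸ Finset.card_image_le) (by simpa using htk.trans hkv)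
      obtain ⟨b, hb, hub⟩ := hB2 u hu
      refine ⟨F b, Finset.mem_image_of_mem F hb, ?_⟩
      intro x hx
      refine Finset.mem_map.mpr ⟨finProdFinEquiv.symm x, ?_, ?_⟩
      · exact Finset.mem_product.mpr
          ⟨Finset.mem_univ _, hub (hsu (Finset.mem_image_of_mem _ hx))⟩
      · exact Equiv.apply_symm_apply _ _
  calc coverNumber (m * v) (m * k) t ≤ (B.image F).card := hle
    _ ≤ B.card := Finset.card_image_le
    _ = coverNumber v k t := hBc
end

section
/- For all integers v, k, t with 0 ≤ t ≤ k ≤ v, if a (v,k,t) Steiner system exists (a family of k-subsets of a v-set covering every t-subset exactly once), then it is an optimal covering: C(v,k,t) = binom(v,t)/binom(k,t), and this value equals the Schönheim bound L(v,k,t). -/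
lemma card_between {α : Type*} [DecidableEq α] (i b : Finset α) (t : ℕ) (hib : i ⊆ b)
    (hit : i.card ≤ t) :
    ((b.powersetCard t).filter (fun s => i ⊆ s)).card
      = (b.card - i.card).choose (t - i.card) := by
  rw [← Finset.card_sdiff_of_subset hib, ← Finset.card_powersetCard]
  symm
  refine Finset.card_bij' (fun s _ => i ∪ s) (fun s _ => s \ i) ?_ ?_ ?_ ?_
  · intro s hs
    simp only [Finset.mem_powersetCard, Finset.mem_filter] at hs ⊢
    have hd : Disjoint i s := (Finset.disjoint_sdiff).mono_right hs.1
    refine ⟨⟨Finset.union_subset hib (hs.1.trans Finset.sdiff_subset), ?_⟩,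
      Finset.subset_union_left⟩
    rw [Finset.card_union_of_disjoint hd, hs.2]
    omega
  · intro s hs
    simp only [Finset.mem_powersetCard, Finset.mem_filter] at hs ⊢
    refine ⟨Finset.sdiff_subset_sdiff hs.1.1 le_rfl, ?_⟩
    rw [Finset.card_sdiff_of_subset hs.2, hs.1.2]
  · intro s hs
    simp only [Finset.mem_powersetCard] at hs
    have hd : Disjoint i s := (Finset.disjoint_sdiff).mono_right hs.1
    exact Finset.union_sdiff_cancel_left hd
  · intro s hs
    simp only [Finset.mem_filter] at hs
    exact Finset.union_sdiff_of_subset hs.2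

lemma steiner_count (v k t : ℕ)
    (B : Finset (Finset (Fin v))) (hblocks : ∀ b ∈ B, b.card = k)
    (hsteiner : ∀ s : Finset (Fin v), s.card = t → ∃! b, b ∈ B ∧ s ⊆ b)
    (i : Finset (Fin v)) (hi : i.card ≤ t) :
    (v - i.card).choose (t - i.card)
      = (B.filter (fun b => i ⊆ b)).card * (k - i.card).choose (t - i.card) := by
  have h1 := card_between i Finset.univ t (Finset.subset_univ i) hi
  rw [Finset.card_univ, Fintype.card_fin] at h1
  have h2 : ((Finset.univ : Finset (Fin v)).powersetCard t).filter (fun s => i ⊆ s)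
      = (B.filter (fun b => i ⊆ b)).biUnion
          (fun b => (b.powersetCard t).filter (fun s => i ⊆ s)) := by
    ext s
    simp only [Finset.mem_filter, Finset.mem_powersetCard, Finset.mem_biUnion]
    constructor
    · rintro ⟨⟨-, hs⟩, his⟩
      obtain ⟨b, ⟨hb, hsb⟩, -⟩ := hsteiner s hs
      exact ⟨b, ⟨hb, his.trans hsb⟩, ⟨hsb, hs⟩, his⟩
    · rintro ⟨b, -, ⟨-, hs⟩, his⟩
      exact ⟨⟨Finset.subset_univ s, hs⟩, his⟩
  rw [← h1, h2, Finset.card_biUnion]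
  · rw [Finset.sum_congr rfl (g := fun _ => (k - i.card).choose (t - i.card))]
    · simp
    · intro b hb
      rw [Finset.mem_filter] at hb
      rw [card_between i b t hb.2 hi, hblocks b hb.1]
  · intro b hb c hc hbc
    rw [Finset.mem_coe, Finset.mem_filter] at hb hc
    rw [Function.onFun, Finset.disjoint_left]
    intro s hs hs'
    simp only [Finset.mem_filter, Finset.mem_powersetCard] at hs hs'
    exact hbc ((hsteiner s hs.1.2).unique ⟨hb.1, hs.1.1⟩ ⟨hc.1, hs'.1.1⟩)

lemma schonheim_eq (t : ℕ) : ∀ v k : ℕ, t ≤ k → k ≤ v →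
    (∀ j ≤ t, (k - j).choose (t - j) ∣ (v - j).choose (t - j)) →
    schonheimL v k t * k.choose t = v.choose t := by
  induction t with
  | zero => intro v k _ _ _; simp [schonheimL]
  | succ t ih =>
    intro v k hk hv h
    obtain ⟨k, rfl⟩ : ∃ k', k = k' + 1 := ⟨k - 1, by omega⟩
    obtain ⟨v, rfl⟩ : ∃ v', v = v' + 1 := ⟨v - 1, by omega⟩
    have ih' := ih v k (by omega) (by omega) (fun j hj => by
      have := h (j + 1) (by omega)
      simpa using this)
    obtain ⟨n, hn⟩ := h 0 (by omega)
    simp only [Nat.sub_zero] at hn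
    have hpos : 0 < k.choose t := Nat.choose_pos (by omega)
    have e1 := Nat.add_one_mul_choose_eq v t
    have e2 := Nat.add_one_mul_choose_eq k t
    have key : (v + 1) * schonheimL v k t = n * (k + 1) := by
      apply Nat.eq_of_mul_eq_mul_right hpos
      calc (v + 1) * schonheimL v k t * k.choose t
          = (v + 1) * (schonheimL v k t * k.choose t) := by ring
        _ = (k + 1).choose (t + 1) * n * (t + 1) := by rw [ih', e1, hn]
        _ = n * ((k + 1).choose (t + 1) * (t + 1)) := by ring
        _ = n * (k + 1) * k.choose t := by rw [← e2]; ring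
    have hL : schonheimL (v + 1) (k + 1) (t + 1) = n := by
      simp only [schonheimL, Nat.add_sub_cancel]
      have : (((v + 1 : ℕ) : ℚ) / ((k + 1 : ℕ) : ℚ)) * (schonheimL v k t : ℚ) = (n : ℚ) := by
        have hk0 : ((k + 1 : ℕ) : ℚ) ≠ 0 := by positivity
        rw [div_mul_eq_mul_div, div_eq_iff hk0]
        exact_mod_cast key
      rw [this, Nat.ceil_natCast]
    rw [hL, hn, mul_comm]

lemma cover_lower (v k t : ℕ) (A : Finset (Finset (Fin v))) (hA : IsCoverDesign v k t A) :
    v.choose t ≤ A.card * k.choose t := by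
  have h : (Finset.univ : Finset (Fin v)).powersetCard t
      ⊆ A.biUnion (fun b => b.powersetCard t) := by
    intro s hs
    rw [Finset.mem_powersetCard] at hs
    obtain ⟨b, hb, hsb⟩ := hA.2 s hs.2
    exact Finset.mem_biUnion.2 ⟨b, hb, Finset.mem_powersetCard.2 ⟨hsb, hs.2⟩⟩
  have h2 := Finset.card_le_card h
  rw [Finset.card_powersetCard, Finset.card_univ, Fintype.card_fin] at h2
  refine h2.trans (Finset.card_biUnion_le_card_mul _ _ _ ?_)
  intro b hb
  rw [Finset.card_powersetCard, hA.1 b hb]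

/-- If a `(v,k,t)` Steiner system exists (a family of `k`-subsets of a `v`-set
covering every `t`-subset exactly once), then it is an optimal covering:
`C(v,k,t) = binom(v,t)/binom(k,t)`, and this value equals the Schönheim bound
`L(v,k,t)`. -/
theorem steiner_system_optimal (v k t : ℕ) (htk : t ≤ k) (hkv : k ≤ v)
    (B : Finset (Finset (Fin v))) (hblocks : ∀ b ∈ B, b.card = k)
    (hsteiner : ∀ s : Finset (Fin v), s.card = t → ∃! b, b ∈ B ∧ s ⊆ b) :
    coverNumber v k t = Nat.choose v t / Nat.choose k t ∧
    coverNumber v k t = schonheimL v k t := by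
  have hpos : 0 < k.choose t := Nat.choose_pos htk
  have hB : v.choose t = B.card * k.choose t := by
    have := steiner_count v k t B hblocks hsteiner ∅ (by simp)
    simpa using this
  have hcover : IsCoverDesign v k t B :=
    ⟨hblocks, fun s hs => by
      obtain ⟨b, hb, -⟩ := hsteiner s hs
      exact ⟨b, hb⟩⟩
  have hC : coverNumber v k t = B.card := by
    apply le_antisymm
    · exact Nat.sInf_le ⟨B, hcover, rfl⟩
    · refine le_csInf ⟨B.card, B, hcover, rfl⟩ ?_
      rintro n ⟨A, hA, rfl⟩
      have := cover_lower v k t A hA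
      rw [hB] at this
      exact Nat.le_of_mul_le_mul_right this hpos
  have hS := schonheim_eq t v k htk hkv (fun j hj => by
    obtain ⟨i, -, hi⟩ := Finset.exists_subset_card_eq
      (s := (Finset.univ : Finset (Fin v))) (n := j) (by simp; omega)
    have := steiner_count v k t B hblocks hsteiner i (by omega)
    rw [hi] at this
    exact ⟨_, this.trans (mul_comm _ _)⟩)
  constructor
  · rw [hC, hB, Nat.mul_div_cancel _ hpos]
  · rw [hC]
    exact Nat.eq_of_mul_eq_mul_right hpos (hB.symm.trans hS.symm)
end

section
/- The 19 cyclic shifts modulo 19 of the block {1,2,3,4,6,8,13,14,17} form a (19,9,3) covering design; hence C(19,9,3) ≤ 19. -/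
def baseBlock : Finset (ZMod 19) := {1, 2, 3, 4, 6, 8, 13, 14, 17}

set_option maxRecDepth 100000 in
set_option maxHeartbeats 4000000 in
/-- Every pair of differences occurs from a common point of the block. -/
lemma pair_diff : ∀ a b : Fin 19, ∃ i : Fin 19,
    i ∈ ([1, 2, 3, 4, 6, 8, 13, 14, 17] : List (Fin 19)) ∧
    i + a ∈ ([1, 2, 3, 4, 6, 8, 13, 14, 17] : List (Fin 19)) ∧
    i + b ∈ ([1, 2, 3, 4, 6, 8, 13, 14, 17] : List (Fin 19)) := by
  decide +kernel

lemma mem_baseBlock (i : ZMod 19)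
    (h : i ∈ ([1, 2, 3, 4, 6, 8, 13, 14, 17] : List (ZMod 19))) : i ∈ baseBlock := by
  simp only [List.mem_cons, List.not_mem_nil, or_false] at h
  simp only [baseBlock, Finset.mem_insert, Finset.mem_singleton]
  exact h

lemma pair_diff_zmod (a b : ZMod 19) : ∃ i : ZMod 19,
    i ∈ baseBlock ∧ i + a ∈ baseBlock ∧ i + b ∈ baseBlock := by
  obtain ⟨i, h1, h2, h3⟩ := pair_diff a b
  exact ⟨i, mem_baseBlock i h1, mem_baseBlock _ h2, mem_baseBlock _ h3⟩

lemma shifts_cover (s : Finset (ZMod 19)) (hs : s.card = 3) :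
    ∃ i : ZMod 19, s ⊆ baseBlock.image (· + i) := by
  obtain ⟨x, y, z, -, -, -, rfl⟩ := Finset.card_eq_three.mp hs
  obtain ⟨i, h1, h2, h3⟩ := pair_diff_zmod (y - x) (z - x)
  refine ⟨x - i, ?_⟩
  intro w hw
  simp only [Finset.mem_insert, Finset.mem_singleton] at hw
  rw [Finset.mem_image]
  rcases hw with rfl | rfl | rfl
  · exact ⟨i, h1, by ring⟩
  · exact ⟨_, h2, by ring⟩
  · exact ⟨_, h3, by ring⟩

/-- The 19 cyclic shifts of the base block. -/
def shiftFamily : Finset (Finset (ZMod 19)) :=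
  Finset.univ.image fun i : ZMod 19 => baseBlock.image (· + i)

lemma shiftFamily_card_le : shiftFamily.card ≤ 19 :=
  Finset.card_image_le.trans (by simp [ZMod.card])

lemma shiftFamily_cover : IsCoverDesign 19 9 3 shiftFamily := by
  constructor
  · intro b hb
    obtain ⟨i, -, rfl⟩ := Finset.mem_image.mp hb
    have h : (baseBlock.image (· + i)).card = 9 := by
      rw [Finset.card_image_of_injective _ (add_left_injective i)]
      decide
    exact h
  · intro s hs
    obtain ⟨i, hi⟩ := shifts_cover s hs
    exact ⟨_, Finset.mem_image.mpr ⟨i, Finset.mem_univ _, rfl⟩, hi⟩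

/-- The 19 cyclic shifts modulo 19 of the block `{1,2,3,4,6,8,13,14,17}` cover every
3-subset of `Z/19Z`, i.e. they form a `(19,9,3)` covering design; hence
`C(19,9,3) ≤ 19`. -/
theorem cyclic_cover_19_9_3 :
    (∀ s : Finset (ZMod 19), s.card = 3 →
       ∃ i : ZMod 19,
         s ⊆ ({1, 2, 3, 4, 6, 8, 13, 14, 17} : Finset (ZMod 19)).image (· + i)) ∧
    coverNumber 19 9 3 ≤ 19 := by
  refine ⟨shifts_cover, ?_⟩
  have h : coverNumber 19 9 3 ≤ shiftFamily.card :=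
    Nat.sInf_le ⟨shiftFamily, shiftFamily_cover, rfl⟩
  exact h.trans shiftFamily_card_le
end
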